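/- Let U = X_{i,j} and V = X_{k,ℓ} be distinct indecomposable representations of Q_ε (0 ≤ i < j ≤ n, 0 ≤ k < ℓ ≤ n, {i,j} ≠ {k,ℓ}). Then neither (U,V) nor (V,U) is an exceptional pair if and only if the chords {i,j} and {k,ℓ} cross. -/

import Mathlib

namespace ESPaper

/-- Source of arrow `a m` (between vertices `m` and `m+1`): `m` if `ε m = +` (true). -/
def asrc (ε : ℕ → Bool) (m : ℕ) : ℕ := if ε m then m else m + 1

/-- Target of arrow `a m`. -/
def atgt (ε : ℕ → Bool) (m : ℕ) : ℕ := if ε m then m + 1 else m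

/-- A representation of the type `A_n` quiver `Q_ε`: finite dimensional vector spaces at the
vertices `1, …, n` (the spaces at the remaining indices are required to be trivial, so that
the maps attached to indices outside `1, …, n-1` carry no information) together with a
linear map along each arrow `a m : asrc ε m → atgt ε m`, `1 ≤ m ≤ n-1`. -/
structure Rep (K : Type) [Field K] (n : ℕ) (ε : ℕ → Bool) : Type 1 where
  V : ℕ → Type
  [instAdd : ∀ m, AddCommGroup (V m)]
  [instMod : ∀ m, Module K (V m)]
  [instFin : ∀ m, FiniteDimensional K (V m)]
  triv : ∀ m, m = 0 ∨ n < m → Subsingleton (V m)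
  φ : ∀ m, V (asrc ε m) →ₗ[K] V (atgt ε m)

attribute [instance] Rep.instAdd Rep.instMod Rep.instFin

/-- A morphism of representations of `Q_ε`. -/
structure RepHom {K : Type} [Field K] {n : ℕ} {ε : ℕ → Bool} (A B : Rep K n ε) where
  app : ∀ m, A.V m →ₗ[K] B.V m
  comm : ∀ m, (app (atgt ε m)).comp (A.φ m) = (B.φ m).comp (app (asrc ε m))

/-- Vertex space of the indecomposable `X_{i,j}` (for `0 ≤ i < j ≤ n`): `K` at the
vertices `i+1, …, j` and `0` elsewhere. -/
def XV (K : Type) [Field K] (n i j m : ℕ) : Submodule K K :=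
  if i + 1 ≤ m ∧ m ≤ j ∧ m ≤ n then ⊤ else ⊥

/-- Arrow map of the indecomposable `X_{i,j}`: the identity whenever both endpoints of the
arrow lie in the support, and zero otherwise. -/
def Xφ (K : Type) [Field K] (n : ℕ) (ε : ℕ → Bool) (i j m : ℕ) :
    XV K n i j (asrc ε m) →ₗ[K] XV K n i j (atgt ε m) :=
  if h : i + 1 ≤ atgt ε m ∧ atgt ε m ≤ j ∧ atgt ε m ≤ n then
    LinearMap.codRestrict _ (XV K n i j (asrc ε m)).subtype
      (fun x => by simp [XV, h.1, h.2.1, h.2.2])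
  else 0

/-- The indecomposable representation `X_{i,j}` of `Q_ε`. -/
def Xrep (K : Type) [Field K] (n : ℕ) (ε : ℕ → Bool) (i j : ℕ) : Rep K n ε where
  V m := XV K n i j m
  instAdd _ := inferInstance
  instMod _ := inferInstance
  instFin _ := inferInstance
  triv m hm := by
    have hneg : ¬ (i + 1 ≤ m ∧ m ≤ j ∧ m ≤ n) := by omega
    have hbot : XV K n i j m = ⊥ := by unfold XV; rw [if_neg hneg]
    show Subsingleton (XV K n i j m)
    rw [hbot]
    infer_instance
  φ m := Xφ K n ε i j m

variable {K : Type} [Field K]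

/-- `Hom(A, B) = 0`. -/
def homZero {n : ℕ} {ε : ℕ → Bool} (A B : Rep K n ε) : Prop :=
  ∀ θ : RepHom A B, ∀ m, θ.app m = 0

/-- `Hom(A, B) ≠ 0`. -/
def homNonzero {n : ℕ} {ε : ℕ → Bool} (A B : Rep K n ε) : Prop :=
  ∃ θ : RepHom A B, ∃ m, θ.app m ≠ 0

/-- `0 → B → E → A → 0` is a short exact sequence. -/
def IsSES {n : ℕ} {ε : ℕ → Bool} {B E A : Rep K n ε}
    (f : RepHom B E) (g : RepHom E A) : Prop :=
  (∀ m, Function.Injective (f.app m)) ∧ (∀ m, Function.Surjective (g.app m)) ∧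
    (∀ m, LinearMap.range (f.app m) = LinearMap.ker (g.app m))

/-- The short exact sequence `0 → B → E → A → 0` splits. -/
def Splits {n : ℕ} {ε : ℕ → Bool} {E A : Rep K n ε} (g : RepHom E A) : Prop :=
  ∃ s : RepHom A E, ∀ m, (g.app m).comp (s.app m) = LinearMap.id

/-- `Ext¹(A, B) ≠ 0`: there is a nonsplit short exact sequence `0 → B → E → A → 0`. -/
def extNonzero {n : ℕ} {ε : ℕ → Bool} (A B : Rep K n ε) : Prop :=
  ∃ (E : Rep K n ε) (f : RepHom B E) (g : RepHom E A), IsSES f g ∧ ¬ Splits g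

/-- `Ext¹(A, B) = 0`. -/
def extZero {n : ℕ} {ε : ℕ → Bool} (A B : Rep K n ε) : Prop := ¬ extNonzero A B

/-- `(U, V)` is an exceptional pair: `Hom(V,U) = 0` and `Ext¹(V,U) = 0`. -/
def ExcPair {n : ℕ} {ε : ℕ → Bool} (U V : Rep K n ε) : Prop := homZero V U ∧ extZero V U


/-- The chords `c = {c.1, c.2}` and `d = {d.1, d.2}` (with `c.1 < c.2`, `d.1 < d.2`) cross. -/
def Crosses (ε : ℕ → Bool) (c d : ℕ × ℕ) : Prop :=
  (c.1 < d.1 ∧ d.1 < c.2 ∧ c.2 < d.2 ∧ ε d.1 = ε c.2) ∨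
  (d.1 < c.1 ∧ c.1 < d.2 ∧ d.2 < c.2 ∧ ε c.1 = ε d.2) ∨
  (c.1 < d.1 ∧ d.1 < d.2 ∧ d.2 < c.2 ∧ ε d.1 ≠ ε d.2) ∨
  (d.1 < c.1 ∧ c.1 < c.2 ∧ c.2 < d.2 ∧ ε c.1 ≠ ε c.2)

/-- The chords `c` and `d` share an endpoint. -/
def SharesEndpoint (c d : ℕ × ℕ) : Prop :=
  c.1 = d.1 ∨ c.1 = d.2 ∨ c.2 = d.1 ∨ c.2 = d.2

/-- The chord `c` is clockwise from the chord `d` (chords written with `c.1 < c.2`, `d.1 < d.2`). -/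
def Cw (ε : ℕ → Bool) (c d : ℕ × ℕ) : Prop :=
  (c.2 = d.1 ∧ ε c.2 = true) ∨
  (d.2 = c.1 ∧ ε c.1 = false) ∨
  (c.1 = d.1 ∧ ((c.2 < d.2 ∧ ε c.2 = false) ∨ (d.2 < c.2 ∧ ε d.2 = true))) ∨
  (c.2 = d.2 ∧ ((c.1 < d.1 ∧ ε d.1 = false) ∨ (d.1 < c.1 ∧ ε c.1 = true)))

/-- The graph on `{0,…,n} ⊆ ℕ` determined by a finite set of chords. -/
def chordGraph (d : Finset (ℕ × ℕ)) : SimpleGraph ℕ :=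
  SimpleGraph.fromEdgeSet {e : Sym2 ℕ | ∃ c ∈ d, e = s(c.1, c.2)}

/-- The graph on `{0,…,n} ⊆ ℕ` determined by a family of chords. -/
def chordGraphF {k : ℕ} (c : Fin k → ℕ × ℕ) : SimpleGraph ℕ :=
  SimpleGraph.fromEdgeSet {e : Sym2 ℕ | ∃ a : Fin k, e = s((c a).1, (c a).2)}

/-- `d` is a strand diagram on `S_{n,ε}`: valid pairwise-noncrossing chords forming a forest. -/
def IsDiagram (n : ℕ) (ε : ℕ → Bool) (d : Finset (ℕ × ℕ)) : Prop :=
  (∀ c ∈ d, c.1 < c.2 ∧ c.2 ≤ n) ∧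
  (∀ c ∈ d, ∀ c' ∈ d, ¬ Crosses ε c c') ∧
  (chordGraph d).IsAcyclic

/-- The family `c` is a strand diagram (pairwise-noncrossing chords forming a forest). -/
def IsDiagramF {k : ℕ} (ε : ℕ → Bool) (c : Fin k → ℕ × ℕ) : Prop :=
  (∀ a b : Fin k, ¬ Crosses ε (c a) (c b)) ∧ (chordGraphF c).IsAcyclic

/-- The partial order of the poset `P_d`: `x ≤ y` iff there is a chain of chords of `d`
from `x` to `y` in which each chord shares an endpoint with, and is clockwise from,
the previous one. -/
def leD (ε : ℕ → Bool) (d : Finset (ℕ × ℕ)) : ℕ × ℕ → ℕ × ℕ → Prop :=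
  Relation.ReflTransGen (fun x y => x ∈ d ∧ y ∈ d ∧ SharesEndpoint x y ∧ Cw ε y x)

/-- support predicate -/
def inS (n i j m : ℕ) : Prop := i + 1 ≤ m ∧ m ≤ j ∧ m ≤ n

instance (n i j m : ℕ) : Decidable (inS n i j m) :=
  inferInstanceAs (Decidable (i + 1 ≤ m ∧ m ≤ j ∧ m ≤ n))

theorem mem_XV {n i j m : ℕ} (h : inS n i j m) (x : K) : x ∈ XV K n i j m := by
  have : XV K n i j m = ⊤ := if_pos h
  rw [this]; trivial

theorem XV_zero {n i j m : ℕ} (h : ¬ inS n i j m) (x : XV K n i j m) : x = 0 := by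
  have hb : XV K n i j m = ⊥ := if_neg h
  have h2 : ∀ y : K, y ∈ XV K n i j m → y = 0 := by
    intro y hy
    rw [hb] at hy
    exact (Submodule.mem_bot K).1 hy
  exact Subtype.ext (h2 _ x.2)

/-- generator -/
def gen (K : Type) [Field K] (n i j m : ℕ) : XV K n i j m :=
  ⟨if inS n i j m then 1 else 0, by
    split_ifs with h
    · exact mem_XV h _
    · exact zero_mem _⟩

theorem gen_val (n i j m : ℕ) : (gen K n i j m : K) = if inS n i j m then 1 else 0 := rfl

theorem eq_smul_gen {n i j m : ℕ} (x : XV K n i j m) : x = (x : K) • gen K n i j m := by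
  by_cases h : inS n i j m
  · apply Subtype.ext
    simp [gen_val, h]
  · rw [XV_zero h x]; simp

theorem map_val {n i j m i' j' m' : ℕ} (h : XV K n i j m →ₗ[K] XV K n i' j' m')
    (x : XV K n i j m) : (h x : K) = (x : K) * (h (gen K n i j m) : K) := by
  conv_lhs => rw [eq_smul_gen x, map_smul]
  simp

theorem map_gen_zero {n i j m i' j' m' : ℕ} (h : XV K n i j m →ₗ[K] XV K n i' j' m')
    (H : ¬ (inS n i j m ∧ inS n i' j' m')) : (h (gen K n i j m) : K) = 0 := by
  by_cases h1 : inS n i j m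
  · rw [XV_zero (fun h2 => H ⟨h1, h2⟩) (h _)]; rfl
  · rw [XV_zero h1 (gen K n i j m)]; simp

/-- scalar map -/
def sc (n i j m i' j' m' : ℕ) (c : K) : XV K n i j m →ₗ[K] XV K n i' j' m' :=
  if h : inS n i' j' m' then
    LinearMap.codRestrict _ (c • (XV K n i j m).subtype)
      (fun x => mem_XV h _)
  else 0

theorem sc_val (n i j m i' j' m' : ℕ) (c : K) (x : XV K n i j m) :
    (sc n i j m i' j' m' c x : K) = if inS n i' j' m' then c * (x : K) else 0 := by
  unfold sc
  split_ifs with h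
  · rfl
  · rfl

theorem val_zero {n i j m : ℕ} (h : ¬ inS n i j m) (x : XV K n i j m) : (x : K) = 0 := by
  rw [XV_zero h x]; rfl

theorem Xφ_val (n : ℕ) (ε : ℕ → Bool) (i j m : ℕ) (x : XV K n i j (asrc ε m)) :
    (Xφ K n ε i j m x : K) = if inS n i j (atgt ε m) then (x : K) else 0 := by
  by_cases h : inS n i j (atgt ε m)
  · rw [if_pos h]
    have h' : i + 1 ≤ atgt ε m ∧ atgt ε m ≤ j ∧ atgt ε m ≤ n := h
    unfold Xφ
    rw [dif_pos h']
    rfl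
  · rw [if_neg h]
    exact val_zero h _

/-- The scalar equations. -/
def Sol (n : ℕ) (ε : ℕ → Bool) (k l i j : ℕ) (d c : ℕ → K) : Prop :=
  (∀ m, ¬ (inS n k l m ∧ inS n i j m) → c m = 0) ∧
  ∀ m, inS n k l (asrc ε m) → inS n i j (atgt ε m) →
    c (atgt ε m) = c (asrc ε m) + d m

/-- maps to scalars -/
theorem sol_of_maps (n : ℕ) (ε : ℕ → Bool) (k l i j : ℕ) (d : ℕ → K)
    (h : ∀ m, XV K n k l m →ₗ[K] XV K n i j m)
    (H : ∀ m (x : XV K n k l (asrc ε m)), (h _ (Xφ K n ε k l m x) : K) =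
      (Xφ K n ε i j m (h _ x) : K) + (if inS n i j (atgt ε m) then d m * (x : K) else 0)) :
    Sol n ε k l i j d (fun m => (h m (gen K n k l m) : K)) := by
  refine ⟨fun m hm => map_gen_zero (h m) hm, fun m h1 h2 => ?_⟩
  have := H m (gen K n k l _)
  rw [map_val, Xφ_val, Xφ_val, if_pos h2, if_pos h2, gen_val, if_pos h1] at this
  by_cases h3 : inS n k l (atgt ε m)
  · rw [if_pos h3] at this
    simpa using this
  · have h4 := map_gen_zero (h (atgt ε m)) (fun h => h3 h.1)
    simp only [h4] at this ⊢
    simpa using this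

theorem maps_of_sol (n : ℕ) (ε : ℕ → Bool) (k l i j : ℕ) (d c : ℕ → K)
    (H : Sol n ε k l i j d c) (m : ℕ) (x : XV K n k l (asrc ε m)) :
    (sc n k l (atgt ε m) i j (atgt ε m) (c (atgt ε m)) (Xφ K n ε k l m x) : K) =
      (Xφ K n ε i j m (sc n k l (asrc ε m) i j (asrc ε m) (c (asrc ε m)) x) : K) +
        (if inS n i j (atgt ε m) then d m * (x : K) else 0) := by
  obtain ⟨H1, H2⟩ := H
  rw [sc_val, Xφ_val, Xφ_val, sc_val]
  by_cases h2 : inS n i j (atgt ε m)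
  · by_cases h1 : inS n k l (asrc ε m)
    · have e := H2 m h1 h2
      have a := H1 (asrc ε m)
      have b := H1 (atgt ε m)
      rw [if_pos h2, if_pos h2, if_pos h2]
      have a' : (if inS n i j (asrc ε m) then c (asrc ε m) * (x : K) else 0) =
          c (asrc ε m) * (x : K) := by
        split_ifs with h
        · rfl
        · rw [a (fun hh => h hh.2), zero_mul]
      have b' : c (atgt ε m) * (if inS n k l (atgt ε m) then (x : K) else 0) =
          c (atgt ε m) * (x : K) := by
        split_ifs with h
        · rfl
        · rw [b (fun hh => h hh.1), zero_mul, zero_mul]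
      rw [a', b', e]
      ring
    · rw [val_zero h1 x]
      simp
  · simp [h2]

theorem homZero_iff (n : ℕ) (ε : ℕ → Bool) (k l i j : ℕ) :
    homZero (Xrep K n ε k l) (Xrep K n ε i j) ↔
      ∀ c : ℕ → K, Sol n ε k l i j 0 c → c = 0 := by
  constructor
  · intro H c hc
    let θ : RepHom (Xrep K n ε k l) (Xrep K n ε i j) :=
      { app := fun m => sc n k l m i j m (c m)
        comm := by
          intro m
          apply LinearMap.ext
          intro x
          apply Subtype.ext
          have := maps_of_sol n ε k l i j 0 c hc m x
          simp only [Pi.zero_apply, zero_mul, ite_self, add_zero] at this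
          exact this }
    funext m
    by_cases hm : inS n k l m ∧ inS n i j m
    · have h1 : sc n k l m i j m (c m) = 0 := H θ m
      have h2 := sc_val n k l m i j m (c m) (gen K n k l m)
      rw [h1, gen_val, if_pos hm.1, if_pos hm.2] at h2
      simpa using h2.symm
    · exact hc.1 m hm
  · intro H θ m
    let h : ∀ m, XV K n k l m →ₗ[K] XV K n i j m := θ.app
    have hs := sol_of_maps n ε k l i j 0 h (by
      intro m x
      have := LinearMap.congr_fun (θ.comm m) x
      have := congrArg (Subtype.val) this
      simp only [Pi.zero_apply, zero_mul, ite_self, add_zero]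
      exact this)
    have h0 := congrFun (H _ hs) m
    show h m = 0
    apply LinearMap.ext
    intro x
    apply Subtype.ext
    rw [map_val]
    have h0' : (h m (gen K n k l m) : K) = 0 := h0
    rw [h0', mul_zero]
    rfl

/-- extension -/
def Eext (n : ℕ) (ε : ℕ → Bool) (k l i j : ℕ) (d : ℕ → K) : Rep K n ε where
  V m := XV K n k l m × XV K n i j m
  instAdd _ := inferInstance
  instMod _ := inferInstance
  instFin _ := inferInstance
  triv m hm := by
    have h1 := (Xrep K n ε k l).triv m hm
    have h2 := (Xrep K n ε i j).triv m hm
    exact @instSubsingletonProd _ _ h1 h2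
  φ m := LinearMap.prod (Xφ K n ε k l m ∘ₗ LinearMap.fst K _ _)
    (Xφ K n ε i j m ∘ₗ LinearMap.snd K _ _ - sc n k l _ i j _ (-d m) ∘ₗ LinearMap.fst K _ _)

theorem sol_of_extZero (n : ℕ) (ε : ℕ → Bool) (k l i j : ℕ)
    (H : extZero (Xrep K n ε k l) (Xrep K n ε i j)) (d : ℕ → K) :
    ∃ c, Sol n ε k l i j d c := by
  by_contra hno
  apply H
  let f : RepHom (Xrep K n ε i j) (Eext n ε k l i j d) :=
    { app := fun m => (LinearMap.inr K (XV K n k l m) (XV K n i j m) :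
        XV K n i j m →ₗ[K] XV K n k l m × XV K n i j m)
      comm := by
        intro m
        apply LinearMap.ext
        intro x
        show ((0 : XV K n k l _), Xφ K n ε i j m x) =
          (Xφ K n ε k l m 0, Xφ K n ε i j m x - sc n k l _ i j _ (-d m) 0)
        simp }
  let g : RepHom (Eext n ε k l i j d) (Xrep K n ε k l) :=
    { app := fun m => (LinearMap.fst K (XV K n k l m) (XV K n i j m) :
        XV K n k l m × XV K n i j m →ₗ[K] XV K n k l m)
      comm := by
        intro m
        apply LinearMap.ext
        intro x
        rfl }
  refine ⟨Eext n ε k l i j d, f, g, ⟨?_, ?_, ?_⟩, ?_⟩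
  · intro m
    exact (LinearMap.inr_injective : Function.Injective
      (LinearMap.inr K (XV K n k l m) (XV K n i j m)))
  · intro m
    exact (LinearMap.fst_surjective : Function.Surjective
      (LinearMap.fst K (XV K n k l m) (XV K n i j m)))
  · intro m
    exact LinearMap.range_inr K (XV K n k l m) (XV K n i j m)
  · rintro ⟨s, hs⟩
    apply hno
    let s' : ∀ m, XV K n k l m →ₗ[K] XV K n k l m × XV K n i j m := s.app
    have hs1 : ∀ m x, (s' m x).1 = x := fun m x => LinearMap.congr_fun (hs m) x
    let h : ∀ m, XV K n k l m →ₗ[K] XV K n i j m := fun m => LinearMap.snd K _ _ ∘ₗ s' m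
    refine ⟨_, sol_of_maps n ε k l i j d h ?_⟩
    intro m x
    have h1 : s' _ (Xφ K n ε k l m x) = (Xφ K n ε k l m (s' _ x).1,
      Xφ K n ε i j m (s' _ x).2 - sc n k l _ i j _ (-d m) (s' _ x).1) :=
      LinearMap.congr_fun (s.comm m) x
    have h2 := congrArg Prod.snd h1
    simp only [hs1] at h2
    have h3 := congrArg (Subtype.val) h2
    show ((s' _ (Xφ K n ε k l m x)).2 : K) = (Xφ K n ε i j m (s' _ x).2 : K) + _
    rw [h3]
    rw [AddSubgroupClass.coe_sub, sc_val]
    split_ifs <;> ring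

theorem extZero_of_sol (n : ℕ) (ε : ℕ → Bool) (k l i j : ℕ)
    (H : ∀ d : ℕ → K, ∃ c, Sol n ε k l i j d c) :
    extZero (Xrep K n ε k l) (Xrep K n ε i j) := by
  rintro ⟨E, f, g, ⟨hf, hg, hfg⟩, hns⟩
  apply hns
  let f' : ∀ m, XV K n i j m →ₗ[K] E.V m := f.app
  let g' : ∀ m, E.V m →ₗ[K] XV K n k l m := g.app
  have hfc : ∀ m x, f' _ (Xφ K n ε i j m x) = E.φ m (f' _ x) :=
    fun m x => LinearMap.congr_fun (f.comm m) x
  have hgc : ∀ m x, g' _ (E.φ m x) = Xφ K n ε k l m (g' _ x) :=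
    fun m x => LinearMap.congr_fun (g.comm m) x
  have hsec : ∀ m, ∃ s : XV K n k l m →ₗ[K] E.V m, g' m ∘ₗ s = LinearMap.id := fun m =>
    (g' m).exists_rightInverse_of_surjective (LinearMap.range_eq_top.2 (hg m))
  choose s hs using hsec
  have hs' : ∀ m x, g' m (s m x) = x := fun m x => LinearMap.congr_fun (hs m) x
  have hgf : ∀ m x, g' m (f' m x) = 0 := by
    intro m x
    have : f' m x ∈ LinearMap.ker (g' m) := by
      have h1 : f' m x ∈ LinearMap.range (f' m) := ⟨x, rfl⟩
      have h2 : LinearMap.range (f' m) = LinearMap.ker (g' m) := hfg m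
      rwa [h2] at h1
    exact this
  -- defect on generators
  have hd : ∀ m, ∃ y : XV K n i j (atgt ε m), f' _ y =
      E.φ m (s _ (gen K n k l (asrc ε m))) - s _ (Xφ K n ε k l m (gen K n k l (asrc ε m))) := by
    intro m
    have h2 : LinearMap.range (f' (atgt ε m)) = LinearMap.ker (g' (atgt ε m)) := hfg _
    have h3 : E.φ m (s _ (gen K n k l (asrc ε m))) -
        s _ (Xφ K n ε k l m (gen K n k l (asrc ε m))) ∈ LinearMap.ker (g' (atgt ε m)) := by
      rw [LinearMap.mem_ker, map_sub, hgc, hs', hs', sub_self]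
    rw [← h2] at h3
    exact h3
  choose y hy using hd
  obtain ⟨c, hc⟩ := H (fun m => (y m : K))
  let h : ∀ m, XV K n k l m →ₗ[K] XV K n i j m := fun m => sc n k l m i j m (c m)
  have key : ∀ m x, h _ (Xφ K n ε k l m x) = Xφ K n ε i j m (h _ x) + (x : K) • y m := by
    intro m x
    apply Subtype.ext
    have := maps_of_sol n ε k l i j _ c hc m x
    rw [Submodule.coe_add, Submodule.coe_smul]
    refine this.trans ?_
    congr 1
    split_ifs with h1
    · simp [mul_comm]
    · rw [val_zero h1 (y m)]; simp
  have hdx : ∀ m x, E.φ m (s _ x) - s _ (Xφ K n ε k l m x) = f' _ ((x : K) • y m) := by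
    intro m x
    rw [map_smul, hy, smul_sub]
    conv_lhs => rw [eq_smul_gen x]
    simp only [map_smul]
  have fin1 : ∀ m (x : XV K n k l (asrc ε m)),
      s _ (Xφ K n ε k l m x) + f' _ (h _ (Xφ K n ε k l m x)) =
      E.φ m (s _ x + f' _ (h _ x)) := by
    intro m x
    rw [key, map_add, map_add, ← hdx, hfc]
    abel
  have fin2 : ∀ m (x : XV K n k l m), g' m (s m x + f' m (h m x)) = x := by
    intro m x
    rw [map_add, hs', hgf, add_zero]
  refine ⟨⟨fun m => (s m + f' m ∘ₗ h m : XV K n k l m →ₗ[K] E.V m), ?_⟩, ?_⟩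
  · intro m
    apply LinearMap.ext
    intro x
    exact fin1 m x
  · intro m
    apply LinearMap.ext
    intro x
    exact fin2 m x

theorem excPair_iff (n : ℕ) (ε : ℕ → Bool) (k l i j : ℕ) :
    ExcPair (Xrep K n ε i j) (Xrep K n ε k l) ↔
      (∀ c : ℕ → K, Sol n ε k l i j 0 c → c = 0) ∧
      ∀ d : ℕ → K, ∃ c, Sol n ε k l i j d c := by
  unfold ExcPair
  rw [homZero_iff]
  exact and_congr_right fun _ => ⟨sol_of_extZero n ε k l i j, extZero_of_sol n ε k l i j⟩


theorem arrow (ε : ℕ → Bool) (m : ℕ) :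
    (ε m = true ∧ asrc ε m = m ∧ atgt ε m = m + 1) ∨
    (ε m = false ∧ asrc ε m = m + 1 ∧ atgt ε m = m) := by
  unfold asrc atgt
  cases ε m <;> simp

theorem solve (n : ℕ) (ε : ℕ → Bool) (k l i j z : ℕ)
    (h : ∀ m, inS n k l (asrc ε m) → inS n i j (atgt ε m) →
      (inS n k l (atgt ε m) ∨ atgt ε m = z) ∧ (inS n i j (asrc ε m) ∨ asrc ε m = z))
    (d : ℕ → K) : ∃ c, Sol n ε k l i j d c := by
  let F : ℕ → K := fun m => ∑ t ∈ Finset.range m, (if ε t then d t else - d t)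
  have hF : ∀ m, F (atgt ε m) = F (asrc ε m) + d m := by
    intro m
    have h1 : F (m + 1) = F m + (if ε m then d m else - d m) := Finset.sum_range_succ _ _
    rcases arrow ε m with ⟨e, e1, e2⟩ | ⟨e, e1, e2⟩ <;> rw [e1, e2, h1, e] <;> simp
  let c : ℕ → K := fun m => if inS n k l m ∧ inS n i j m then F m - F z else 0
  refine ⟨c, fun m hm => if_neg hm, fun m h1 h2 => ?_⟩
  obtain ⟨h3, h4⟩ := h m h1 h2
  have a : c (atgt ε m) = F (atgt ε m) - F z := by
    by_cases hh : inS n k l (atgt ε m)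
    · exact if_pos ⟨hh, h2⟩
    · rw [show c (atgt ε m) = 0 from if_neg (fun x => hh x.1), h3.resolve_left hh, sub_self]
  have b : c (asrc ε m) = F (asrc ε m) - F z := by
    by_cases hh : inS n i j (asrc ε m)
    · exact if_pos ⟨h1, hh⟩
    · rw [show c (asrc ε m) = 0 from if_neg (fun x => hh x.2), h4.resolve_left hh, sub_self]
  rw [a, b, hF]
  ring

/-- left condition -/
def Lc (ε : ℕ → Bool) (k i : ℕ) : Prop := (k < i → ε i = false) ∧ (i < k → ε k = true)

/-- right condition -/
def Rc (ε : ℕ → Bool) (l j : ℕ) : Prop := (j < l → ε j = true) ∧ (l < j → ε l = false)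

theorem sol_const (n : ℕ) (ε : ℕ → Bool) (k l i j : ℕ) (hjn : j ≤ n) (hln : l ≤ n)
    (d c : ℕ → K) (hs : Sol n ε k l i j d c) (p q : ℕ) (hp : p = max i k) (hq : q = min j l)
    (hd : ∀ m, p < m → m < q → d m = 0) :
    ∀ m, p + 1 ≤ m → m ≤ q → c m = c (p + 1) := by
  intro m hm
  induction m, hm using Nat.le_induction with
  | base => intro _; rfl
  | succ m hm ih =>
    intro hq'
    rw [← ih (by omega)]
    have := hs.2 m
    rw [hd m (by omega) (by omega)] at this
    unfold inS at this
    rcases arrow ε m with ⟨e, e1, e2⟩ | ⟨e, e1, e2⟩ <;> rw [e1, e2] at this <;>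
      have := this (by omega) (by omega) <;>
      first | simpa using this | simpa using this.symm

theorem sol_left (n : ℕ) (ε : ℕ → Bool) (k l i j : ℕ) (hjn : j ≤ n) (hln : l ≤ n)
    (d c : ℕ → K) (hs : Sol n ε k l i j d c) (p q : ℕ) (hp : p = max i k) (hq : q = min j l)
    (hpq : p < q) (hL : ¬ Lc ε k i) (hd : d p = 0) : c (p + 1) = 0 := by
  have h1 := hs.1 p (by unfold inS; omega)
  have := hs.2 p
  rw [hd] at this
  unfold inS at this
  unfold Lc at hL
  rcases lt_trichotomy k i with h | h | h
  · obtain rfl : p = i := by omega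
    rcases arrow ε p with ⟨e, e1, e2⟩ | ⟨e, e1, e2⟩
    · rw [e1, e2] at this
      rw [this (by omega) (by omega), h1, add_zero]
    · exact absurd ⟨fun _ => e, fun h => by omega⟩ hL
  · exact absurd ⟨fun h => by omega, fun h => by omega⟩ hL
  · obtain rfl : p = k := by omega
    rcases arrow ε p with ⟨e, e1, e2⟩ | ⟨e, e1, e2⟩
    · exact absurd ⟨fun h => by omega, fun _ => e⟩ hL
    · rw [e1, e2] at this
      have := this (by omega) (by omega)
      rw [h1, add_zero] at this
      exact this.symm

theorem sol_right (n : ℕ) (ε : ℕ → Bool) (k l i j : ℕ) (hjn : j ≤ n) (hln : l ≤ n)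
    (d c : ℕ → K) (hs : Sol n ε k l i j d c) (p q : ℕ) (hp : p = max i k) (hq : q = min j l)
    (hpq : p < q) (hR : ¬ Rc ε l j) : c q = d q ∨ c q = - d q := by
  have h1 := hs.1 (q + 1) (by unfold inS; omega)
  have := hs.2 q
  unfold inS at this
  unfold Rc at hR
  rcases lt_trichotomy j l with h | h | h
  · obtain rfl : q = j := by omega
    rcases arrow ε q with ⟨e, e1, e2⟩ | ⟨e, e1, e2⟩
    · exact absurd ⟨fun _ => e, fun h => by omega⟩ hR
    · rw [e1, e2] at this
      rw [this (by omega) (by omega), h1, zero_add]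
      exact Or.inl rfl
  · exact absurd ⟨fun h => by omega, fun h => by omega⟩ hR
  · obtain rfl : q = l := by omega
    rcases arrow ε q with ⟨e, e1, e2⟩ | ⟨e, e1, e2⟩
    · rw [e1, e2] at this
      have := this (by omega) (by omega)
      rw [h1] at this
      exact Or.inr (eq_neg_of_add_eq_zero_left this.symm)
    · exact absurd ⟨fun h => by omega, fun _ => e⟩ hR

/-- combinatorial criterion -/
def Bad (ε : ℕ → Bool) (k l i j : ℕ) : Prop :=
  (max i k < min j l ∧ (Lc ε k i ↔ Rc ε l j)) ∨ (j = k ∧ ε j = false) ∨ (l = i ∧ ε i = true)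

theorem excPair_iff_bad (n : ℕ) (ε : ℕ → Bool) (k l i j : ℕ) (hij : i < j) (hkl : k < l)
    (hjn : j ≤ n) (hln : l ≤ n) :
    ¬ ExcPair (Xrep K n ε i j) (Xrep K n ε k l) ↔ Bad ε k l i j := by
  rw [excPair_iff]
  constructor
  · contrapose!
    intro hB
    unfold Bad at hB
    push Not at hB
    obtain ⟨hB1, hB2, hB3⟩ := hB
    constructor
    · intro c hc
      funext m
      by_cases hm : inS n k l m ∧ inS n i j m
      · unfold inS at hm
        have hpq : max i k < min j l := by omega
        have e1 := sol_const n ε k l i j hjn hln 0 c hc _ _ rfl rfl (fun _ _ _ => rfl)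
        rw [e1 m (by omega) (by omega)]
        by_cases hL : Lc ε k i
        · have hR : ¬ Rc ε l j := by
            have := hB1 hpq
            tauto
          rw [← e1 (min j l) (by omega) (by omega)]
          have := sol_right n ε k l i j hjn hln 0 c hc _ _ rfl rfl hpq hR
          simpa using this
        · exact sol_left n ε k l i j hjn hln 0 c hc _ _ rfl rfl hpq hL rfl
      · exact hc.1 m hm
    · by_cases hpq : max i k < min j l
      · by_cases hL : Lc ε k i
        · refine solve n ε k l i j (min j l + 1) ?_
          intro m
          unfold inS
          unfold Lc at hL
          rcases lt_trichotomy k i with h | h | h <;>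
          rcases arrow ε m with ⟨e, e1, e2⟩ | ⟨e, e1, e2⟩ <;> rw [e1, e2] <;> grind
        · have hR : Rc ε l j := by
            have := hB1 hpq
            tauto
          refine solve n ε k l i j (max i k) ?_
          intro m
          unfold inS
          unfold Rc at hR
          rcases lt_trichotomy l j with h | h | h <;>
          rcases arrow ε m with ⟨e, e1, e2⟩ | ⟨e, e1, e2⟩ <;> rw [e1, e2] <;> grind
      · refine solve n ε k l i j 0 ?_
        intro m
        unfold inS
        rcases arrow ε m with ⟨e, e1, e2⟩ | ⟨e, e1, e2⟩ <;> rw [e1, e2] <;> grind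
  · rintro (⟨hpq, hLR⟩ | ⟨rfl, he⟩ | ⟨rfl, he⟩) ⟨H1, H2⟩
    · by_cases hL : Lc ε k i
      · have hR := hLR.1 hL
        have := H1 (fun m => if inS n k l m ∧ inS n i j m then 1 else 0) (by
          refine ⟨fun m hm => if_neg hm, fun m h1 h2 => ?_⟩
          have : (inS n k l (atgt ε m) ∧ inS n i j (atgt ε m)) ↔
              (inS n k l (asrc ε m) ∧ inS n i j (asrc ε m)) := by
            unfold Lc at hL
            unfold Rc at hR
            unfold inS at h1 h2 ⊢
            clear H1 H2 hLR
            rcases arrow ε m with ⟨e, e1, e2⟩ | ⟨e, e1, e2⟩ <;> 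
              rw [e1] at h1 ⊢ <;> rw [e2] at h2 ⊢ <;> grind
          simp [this])
        have := congrFun this (max i k + 1)
        rw [if_pos (by unfold inS; omega)] at this
        exact one_ne_zero this
      · have hR : ¬ Rc ε l j := fun h => hL (hLR.2 h)
        obtain ⟨c, hc⟩ := H2 (Pi.single (min j l) 1)
        have hz : ∀ m, m < min j l → (Pi.single (min j l) 1 : ℕ → K) m = 0 := by
          intro m hm
          exact Pi.single_eq_of_ne (by omega) _
        have e1 := sol_const n ε k l i j hjn hln _ c hc _ _ rfl rfl (fun m _ h => hz m h)
          (min j l) (by omega) le_rfl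
        have e2 := sol_left n ε k l i j hjn hln _ c hc _ _ rfl rfl hpq hL (hz _ hpq)
        have e3 := sol_right n ε k l i j hjn hln _ c hc _ _ rfl rfl hpq hR
        rw [e1, e2, Pi.single_eq_same] at e3
        rcases e3 with e3 | e3
        · exact zero_ne_one e3
        · exact (neg_ne_zero.2 one_ne_zero) e3.symm
    · obtain ⟨c, hc⟩ := H2 (fun _ => 1)
      have a := hc.1 j (by unfold inS; omega)
      have b := hc.1 (j + 1) (by unfold inS; omega)
      have := hc.2 j
      rcases arrow ε j with ⟨e, e1, e2⟩ | ⟨e, e1, e2⟩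
      · simp [he] at e
      · rw [e1, e2, a, b] at this
        have := this (by unfold inS; omega) (by unfold inS; omega)
        simp at this
    · obtain ⟨c, hc⟩ := H2 (fun _ => 1)
      have a := hc.1 l (by unfold inS; omega)
      have b := hc.1 (l + 1) (by unfold inS; omega)
      have := hc.2 l
      rcases arrow ε l with ⟨e, e1, e2⟩ | ⟨e, e1, e2⟩
      · rw [e1, e2, a, b] at this
        have := this (by unfold inS; omega) (by unfold inS; omega)
        simp at this
      · simp [he] at e

theorem bad_iff (ε : ℕ → Bool) (i j k l : ℕ) (hij : i < j) (hkl : k < l)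
    (hne : ¬(i = k ∧ j = l)) :
    (Bad ε k l i j ∧ Bad ε i j k l) ↔ Crosses ε (i, j) (k, l) := by
  unfold Bad Crosses Lc Rc
  dsimp only
  have E1 : j = k → ε j = ε k := fun h => h ▸ rfl
  have E2 : l = i → ε l = ε i := fun h => h ▸ rfl
  have E3 : i = k → ε i = ε k := fun h => h ▸ rfl
  have E4 : j = l → ε j = ε l := fun h => h ▸ rfl
  generalize ε i = a at *
  generalize ε j = b at *
  generalize ε k = c at *
  generalize ε l = d at *
  cases a <;> cases b <;> cases c <;> cases d <;>
    simp only [reduceCtorEq, imp_false, imp_true_iff, and_true, true_and, and_false, false_and,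
      or_false, false_or, ne_eq, not_true_eq_false, not_false_eq_true, iff_true, true_iff,
      iff_false, false_iff, implies_true, forall_const] at * <;>
    first | omega | grind

/-- Lemma 3.5 a): neither `(U,V)` nor `(V,U)` is exceptional iff the strands
intersect nontrivially (the chords cross). -/
theorem not_exceptional_iff_cross (K : Type) [Field K] (n : ℕ) (ε : ℕ → Bool)
    (i j k l : ℕ) (hij : i < j) (hjn : j ≤ n) (hkl : k < l) (hln : l ≤ n)
    (hne : ¬(i = k ∧ j = l)) :
    (¬ ExcPair (Xrep K n ε i j) (Xrep K n ε k l) ∧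
     ¬ ExcPair (Xrep K n ε k l) (Xrep K n ε i j)) ↔ Crosses ε (i, j) (k, l) := by
  rw [excPair_iff_bad n ε k l i j hij hkl hjn hln, excPair_iff_bad n ε i j k l hkl hij hln hjn]
  exact bad_iff ε i j k l hij hkl hne

end ESPaper
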